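/- arXiv:2308.01817 — 2 statements merged into one kernel-verified Lean document; each statement's English description precedes it below -/
import Mathlib

section
/- Let M be a finite nonempty set of alternatives partitioned into nests via B, with θ > 0, dissimilarity factors τ_N ∈ (0,1], and utilities (V_m)_{m∈M}. Consider the equivalent reformulated problem of minimizing Z(p_·, p_{·/·}) = Σ_N p_N ln p_N + Σ_N τ_N p_N Σ_{m∈N} p_{m/N} ln p_{m/N} − Σ_N Σ_{m∈N} p_N p_{m/N} θ V_m over strictly positive variables (p_N)_N and (p_{m/N})_{m∈N,N}, subject to Σ_N p_N = 1 and, for each nest N, Σ_{m∈N} p_{m/N} = 1. If strictly positive feasible variables (p_N, p_{m/N}) together with Lagrange multipliers λ (for Σ_N p_N = 1) and φ_N (for Σ_{m∈N} p_{m/N} = 1) satisfy the first-order stationarity conditions ∂Z/∂p_N = ln p_N + 1 + τ_N Σ_{m∈N} p_{m/N} ln p_{m/N} − Σ_{m∈N} p_{m/N} θ V_m − λ = 0 and ∂Z/∂p_{m/N} = τ_N p_N (ln p_{m/N} + 1) − p_N θ V_m − φ_N = 0, then p_{m/N} = exp(θ V_m/τ_N) / Σ_{m'∈N} exp(θ V_{m'}/τ_N)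 for every m ∈ N, and p_N = exp(IV_N) / Σ_{N'} exp(IV_{N'}) where IV_N = τ_N ln Σ_{m∈N} exp(θ V_m/τ_N). -/
open Real Finset

/-!
Stationarity in `p_{m/N}` says that `ln p_{m/N}` is `θ V_m / τ_N` up to a constant depending only
on `N`; normalization determines that constant, so the within-nest probabilities are logit.
At logit probabilities the within-nest part `τ_N ∑ p ln p - ∑ p θ V` of the objective equals
`-IV_N`, so stationarity in `p_N` says that `ln p_N` is `IV_N` up to a constant, and the same
normalization argument applies one level up.
-/

section Logit

variable {ι : Type*} {s : Finset ι}

/-- The multinomial logit probability of the alternative `i` in the choice set `s` under the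
utilities `u`; it is meaningful only for `i ∈ s`. -/
noncomputable def logitProb (s : Finset ι) (u : ι → ℝ) (i : ι) : ℝ :=
  exp (u i) / ∑ j ∈ s, exp (u j)

/-- The inclusive value of the nest `s` with dissimilarity factor `τ`; the scale `θ` is absorbed
into the utilities `u`. -/
noncomputable def inclusiveValue (s : Finset ι) (τ : ℝ) (u : ι → ℝ) : ℝ :=
  τ * log (∑ i ∈ s, exp (u i / τ))

theorem sum_exp_pos (hs : s.Nonempty) (u : ι → ℝ) : 0 < ∑ i ∈ s, exp (u i) :=
  sum_pos (fun i _ => exp_pos (u i)) hs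

theorem sum_logitProb (hs : s.Nonempty) (u : ι → ℝ) : ∑ i ∈ s, logitProb s u i = 1 := by
  simp only [logitProb, ← sum_div, div_self (sum_exp_pos hs u).ne']

theorem log_logitProb (hs : s.Nonempty) (u : ι → ℝ) (i : ι) :
    log (logitProb s u i) = u i - log (∑ j ∈ s, exp (u j)) := by
  rw [logitProb, log_div (exp_ne_zero _) (sum_exp_pos hs u).ne', log_exp]

theorem eq_logitProb_of_log_eq_add_const {p u : ι → ℝ} {c : ℝ} (hp : ∀ i ∈ s, 0 < p i)
    (hsum : ∑ i ∈ s, p i = 1) (hlog : ∀ i ∈ s, log (p i) = u i + c) {i : ι} (hi : i ∈ s) :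
    p i = logitProb s u i := by
  have p_eq : ∀ j ∈ s, p j = exp (u j) * exp c := fun j hj => by
    rw [← exp_add, ← hlog j hj, exp_log (hp j hj)]
  have normalization : exp c * ∑ j ∈ s, exp (u j) = 1 := by
    rw [mul_comm, sum_mul, ← sum_congr rfl p_eq, hsum]
  rw [logitProb, eq_div_iff (sum_exp_pos ⟨i, hi⟩ u).ne', p_eq i hi, mul_assoc, normalization,
    mul_one]

theorem mul_sum_mul_log_sub_sum_mul_eq_neg_inclusiveValue (hs : s.Nonempty) {τ : ℝ} (hτ : τ ≠ 0)
    {p u : ι → ℝ} (hp : ∀ i ∈ s, p i = logitProb s (fun j => u j / τ) i) :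
    τ * ∑ i ∈ s, p i * log (p i) - ∑ i ∈ s, p i * u i = -inclusiveValue s τ u := by
  have hsum : ∑ i ∈ s, p i = 1 := (sum_congr rfl hp).trans (sum_logitProb hs _)
  have log_p : ∀ i ∈ s, τ * log (p i) = u i - inclusiveValue s τ u := fun i hi => by
    rw [hp i hi, log_logitProb hs, mul_sub, mul_div_cancel₀ _ hτ, inclusiveValue]
  calc τ * ∑ i ∈ s, p i * log (p i) - ∑ i ∈ s, p i * u i
      = ∑ i ∈ s, p i * (τ * log (p i) - u i) := by
        rw [mul_sum, ← sum_sub_distrib]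
        exact sum_congr rfl fun i _ => by ring
    _ = ∑ i ∈ s, p i * -inclusiveValue s τ u :=
        sum_congr rfl fun i hi => by rw [log_p i hi, sub_sub_cancel_left]
    _ = -inclusiveValue s τ u := by rw [← sum_mul, hsum, one_mul]

end Logit

theorem log_eq_div_add_const_of_stationary {τ q p v φ : ℝ} (hτ : τ ≠ 0) (hq : q ≠ 0)
    (hstat : τ * q * (log p + 1) - q * v - φ = 0) : log p = v / τ + (φ / (τ * q) - 1) := by
  field_simp
  linarith

theorem nested_logit_from_stationarity_general {M 𝒩 : Type*} [Fintype 𝒩]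
    (s : 𝒩 → Finset M) (τ : 𝒩 → ℝ) (hτ : ∀ N, τ N ≠ 0) (u : 𝒩 → M → ℝ)
    (pN : 𝒩 → ℝ) (pmN : 𝒩 → M → ℝ) (lam : ℝ) (φ : 𝒩 → ℝ)
    (hpN : ∀ N, 0 < pN N) (hpmN : ∀ N, ∀ m ∈ s N, 0 < pmN N m)
    (hsumN : ∑ N, pN N = 1) (hsumm : ∀ N, ∑ m ∈ s N, pmN N m = 1)
    (hstatN : ∀ N, log (pN N) + 1 + τ N * ∑ m ∈ s N, pmN N m * log (pmN N m)
      - ∑ m ∈ s N, pmN N m * u N m - lam = 0)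
    (hstatm : ∀ N, ∀ m ∈ s N,
      τ N * pN N * (log (pmN N m) + 1) - pN N * u N m - φ N = 0) :
    (∀ N, ∀ m ∈ s N, pmN N m = logitProb (s N) (fun m' => u N m' / τ N) m) ∧
      ∀ N, pN N = logitProb univ (fun N' => inclusiveValue (s N') (τ N') (u N')) N := by
  have within_nest (N : 𝒩) : ∀ m ∈ s N, pmN N m = logitProb (s N) (fun m' => u N m' / τ N) m :=
    fun m hm => eq_logitProb_of_log_eq_add_const (hpmN N) (hsumm N)
      (fun m' hm' => log_eq_div_add_const_of_stationary (hτ N) (hpN N).ne' (hstatm N m' hm')) hm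
  have log_pN (N : 𝒩) : log (pN N) = inclusiveValue (s N) (τ N) (u N) + (lam - 1) := by
    have nest_nonempty : (s N).Nonempty :=
      nonempty_of_sum_ne_zero ((hsumm N).trans_ne one_ne_zero)
    linarith [hstatN N, mul_sum_mul_log_sub_sum_mul_eq_neg_inclusiveValue nest_nonempty (hτ N)
      (within_nest N)]
  exact ⟨within_nest, fun N => eq_logitProb_of_log_eq_add_const (fun N' _ => hpN N') hsumN
    (fun N' _ => log_pN N') (mem_univ N)⟩

/-- First-order stationarity of the reformulated nested-logit
entropy problem yields the nested logit formulas for the within-nest and nest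
probabilities. -/
theorem nested_logit_from_stationarity
    {M 𝒩 : Type*} [Fintype M] [Nonempty M] [Fintype 𝒩] [DecidableEq 𝒩]
    (B : M → 𝒩) (hB : Function.Surjective B)
    (θ : ℝ) (hθ : 0 < θ)
    (τ : 𝒩 → ℝ) (hτ0 : ∀ N, 0 < τ N) (hτ1 : ∀ N, τ N ≤ 1)
    (V : M → ℝ)
    (pN : 𝒩 → ℝ) (pmN : M → ℝ) (lam : ℝ) (φ : 𝒩 → ℝ)
    (hpN : ∀ N, 0 < pN N) (hpmN : ∀ m, 0 < pmN m)
    (hsumN : ∑ N, pN N = 1)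
    (hsumm : ∀ N, ∑ m ∈ univ.filter (fun m => B m = N), pmN m = 1)
    (hstatN : ∀ N, Real.log (pN N) + 1
      + τ N * ∑ m ∈ univ.filter (fun m => B m = N), pmN m * Real.log (pmN m)
      - (∑ m ∈ univ.filter (fun m => B m = N), pmN m * (θ * V m)) - lam = 0)
    (hstatm : ∀ m, τ (B m) * pN (B m) * (Real.log (pmN m) + 1)
      - pN (B m) * (θ * V m) - φ (B m) = 0) :
    (∀ m, pmN m = Real.exp (θ * V m / τ (B m)) /
        ∑ m' ∈ univ.filter (fun m' => B m' = B m), Real.exp (θ * V m' / τ (B m))) ∧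
    (∀ N, pN N =
      Real.exp (τ N * Real.log (∑ m ∈ univ.filter (fun m => B m = N),
          Real.exp (θ * V m / τ N))) /
        ∑ N', Real.exp (τ N' * Real.log (∑ m ∈ univ.filter (fun m => B m = N'),
          Real.exp (θ * V m / τ N')))) := by
  have h := nested_logit_from_stationarity_general (fun N => univ.filter (B · = N)) τ
    (fun N => (hτ0 N).ne') (fun _ m => θ * V m) pN (fun _ => pmN) lam φ hpN (fun _ m _ => hpmN m)
    hsumN hsumm hstatN (fun N m hm => (mem_filter_univ m).1 hm ▸ hstatm m)
  exact ⟨fun m => h.1 (B m) m (mem_filter_univ m |>.2 rfl), h.2⟩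
end

section
/- Let M be a finite nonempty set of alternatives partitioned into nests via B with dissimilarity factors τ_N ∈ (0,1]. The nested entropy function H(p) = −Σ_{m∈M} [ τ_{B(m)} p_m ln p_m + (1 − τ_{B(m)}) p_m ln( Σ_{m'∈B(m)} p_{m'} ) ] is concave on the set of strictly positive probability vectors {p : p_m > 0, Σ_m p_m = 1}; hence for any θ > 0 and utilities (V_m), the objective of problem MaxSatisNL, p ↦ Σ_m V_m p_m + (1/θ) H(p), is concave on this set, so MaxSatisNL is a convex maximization problem. -/
open Real Finset

/-!
Grouping the terms of `H` by nest turns it into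
`∑ m, τ (B m) * negMulLog (p m) + ∑ N, (1 - τ N) * negMulLog (P N)`, where `P N` is the total
probability of the nest `N`. Both families of weights are nonnegative because `0 ≤ τ ≤ 1`, and
`negMulLog` is concave on `[0, ∞)`, so each term is a nonnegative multiple of a concave function of
a nonnegative linear functional of `p`.
-/

section Convexity

lemma concaveOn_finset_sum {𝕜 E β ι : Type*} [Semiring 𝕜] [PartialOrder 𝕜] [AddCommMonoid E]
    [SMul 𝕜 E] [AddCommMonoid β] [PartialOrder β] [IsOrderedAddMonoid β] [DistribSMul 𝕜 β]
    {s : Set E} (hs : Convex 𝕜 s) (t : Finset ι) {f : ι → E → β}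
    (hf : ∀ i ∈ t, ConcaveOn 𝕜 s (f i)) : ConcaveOn 𝕜 s (fun x => ∑ i ∈ t, f i x) := by
  refine ⟨hs, fun x hx y hy a b ha hb hab => ?_⟩
  simp only [smul_sum, ← sum_add_distrib]
  exact sum_le_sum fun i hi => (hf i hi).2 hx hy ha hb hab

lemma convex_setOf_pos_and_sum_eq (𝕜 : Type*) {ι : Type*} [Fintype ι] [Semiring 𝕜]
    [PartialOrder 𝕜] [IsStrictOrderedRing 𝕜] (c : 𝕜) :
    Convex 𝕜 {p : ι → 𝕜 | (∀ i, 0 < p i) ∧ ∑ i, p i = c} := by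
  have pos : Convex 𝕜 {p : ι → 𝕜 | ∀ i, 0 < p i} := by
    simpa only [Set.pi, Set.mem_univ, forall_const, Set.mem_Ioi] using
      convex_pi (s := Set.univ) fun (_ : ι) _ => convex_Ioi (𝕜 := 𝕜) (0 : 𝕜)
  have sum_eq : Convex 𝕜 {p : ι → 𝕜 | ∑ i, p i = c} :=
    convex_hyperplane ⟨fun _ _ => sum_add_distrib, fun _ _ => (mul_sum ..).symm⟩ c
  exact pos.inter sum_eq

variable {E : Type*} [AddCommMonoid E] [Module ℝ E] {s : Set E}

lemma concaveOn_negMulLog_comp_linearMap (hs : Convex ℝ s) (f : E →ₗ[ℝ] ℝ)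
    (hf : ∀ x ∈ s, 0 ≤ f x) : ConcaveOn ℝ s (fun x => negMulLog (f x)) :=
  (concaveOn_negMulLog.comp_linearMap f).subset hf hs

lemma concaveOn_sum_mul_negMulLog {ι : Type*} (hs : Convex ℝ s) (t : Finset ι)
    {w : ι → ℝ} (hw : ∀ i ∈ t, 0 ≤ w i) (f : ι → E →ₗ[ℝ] ℝ)
    (hf : ∀ i ∈ t, ∀ x ∈ s, 0 ≤ f i x) :
    ConcaveOn ℝ s (fun x => ∑ i ∈ t, w i * negMulLog (f i x)) :=
  concaveOn_finset_sum hs t fun i hi =>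
    (concaveOn_negMulLog_comp_linearMap hs (f i) (hf i hi)).smul (hw i hi)

end Convexity

section NestedEntropy

variable {M 𝒩 : Type*} [Fintype M] [DecidableEq 𝒩]

/-- The total probability of the nest `N`, as a linear functional of the vector `p`, so that
concavity can be pulled back along it. -/
noncomputable def nestMass (B : M → 𝒩) (N : 𝒩) : (M → ℝ) →ₗ[ℝ] ℝ :=
  ∑ m with B m = N, LinearMap.proj m

lemma nestMass_apply (B : M → 𝒩) (N : 𝒩) (p : M → ℝ) :
    nestMass B N p = ∑ m with B m = N, p m := by
  simp only [nestMass, LinearMap.sum_apply, LinearMap.proj_apply]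

lemma nestMass_nonneg (B : M → 𝒩) (N : 𝒩) {p : M → ℝ} (hp : 0 ≤ p) : 0 ≤ nestMass B N p := by
  rw [nestMass_apply]
  exact sum_nonneg fun m _ => hp m

/-- The nested entropy `H(p)` of a vector `p`, for the nests `B` and dissimilarity factors `τ`.
It is defined for all real vectors; since `Real.log 0 = 0`, vanishing coordinates follow the usual
convention `0 ln 0 = 0`. -/
noncomputable def nestedEntropy (B : M → 𝒩) (τ : 𝒩 → ℝ) (p : M → ℝ) : ℝ :=
  -∑ m, (τ (B m) * p m * Real.log (p m) +
    (1 - τ (B m)) * p m * Real.log (∑ m' with B m' = B m, p m'))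

lemma sum_mul_eq_sum_nestMass_mul (B : M → 𝒩) (p : M → ℝ) (g : 𝒩 → ℝ) :
    ∑ m, p m * g (B m) = ∑ N ∈ univ.image B, nestMass B N p * g N := by
  rw [← sum_fiberwise_of_maps_to fun m hm => mem_image_of_mem B hm]
  refine sum_congr rfl fun N _ => ?_
  rw [nestMass_apply, sum_mul]
  exact sum_congr rfl fun m hm => by rw [(mem_filter.1 hm).2]

lemma nestedEntropy_eq_sum_negMulLog (B : M → 𝒩) (τ : 𝒩 → ℝ) (p : M → ℝ) :
    nestedEntropy B τ p = ∑ m, τ (B m) * negMulLog (p m) +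
      ∑ N ∈ univ.image B, (1 - τ N) * negMulLog (nestMass B N p) := by
  have between_nests := sum_mul_eq_sum_nestMass_mul B p
    fun N => -((1 - τ N) * Real.log (nestMass B N p))
  calc nestedEntropy B τ p
      = ∑ m, τ (B m) * negMulLog (p m) +
          ∑ m, p m * -((1 - τ (B m)) * Real.log (nestMass B (B m) p)) := by
        simp only [nestedEntropy, nestMass_apply, negMulLog, ← sum_add_distrib, ← sum_neg_distrib]
        exact sum_congr rfl fun m _ => by ring
    _ = ∑ m, τ (B m) * negMulLog (p m) +
          ∑ N ∈ univ.image B, (1 - τ N) * negMulLog (nestMass B N p) := by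
        rw [between_nests]
        congr 1
        exact sum_congr rfl fun N _ => by rw [negMulLog]; ring

theorem concaveOn_nestedEntropy (B : M → 𝒩) {τ : 𝒩 → ℝ} (hτ : ∀ N, τ N ∈ Set.Icc 0 1) :
    ConcaveOn ℝ (Set.Ici 0) (nestedEntropy B τ) := by
  have within_nests : ConcaveOn ℝ (Set.Ici 0)
      fun p : M → ℝ => ∑ m, τ (B m) * negMulLog (p m) :=
    concaveOn_sum_mul_negMulLog (convex_Ici 0) univ (fun m _ => (hτ (B m)).1)
      LinearMap.proj fun m _ _ hp => hp m
  have between_nests : ConcaveOn ℝ (Set.Ici 0)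
      fun p : M → ℝ => ∑ N ∈ univ.image B, (1 - τ N) * negMulLog (nestMass B N p) :=
    concaveOn_sum_mul_negMulLog (convex_Ici 0) _ (fun N _ => sub_nonneg.2 (hτ N).2)
      (nestMass B) fun N _ _ hp => nestMass_nonneg B N hp
  exact (within_nests.add between_nests).congr fun p _ =>
    (nestedEntropy_eq_sum_negMulLog B τ p).symm

theorem nested_entropy_concave_general (B : M → 𝒩) {τ : 𝒩 → ℝ} (hτ : ∀ N, τ N ∈ Set.Icc 0 1)
    {θ : ℝ} (hθ : 0 < θ) (V : M → ℝ) :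
    ConcaveOn ℝ (Set.Ici 0) (nestedEntropy B τ) ∧
    ConcaveOn ℝ (Set.Ici 0) (fun p => ∑ m, V m * p m + 1 / θ * nestedEntropy B τ p) := by
  have entropy := concaveOn_nestedEntropy B hτ
  have utility : ConcaveOn ℝ (Set.Ici 0) fun p : M → ℝ => ∑ m, V m * p m :=
    (dotProductBilin ℝ ℝ V).concaveOn (convex_Ici 0)
  exact ⟨entropy, utility.add (entropy.smul (one_div_pos.2 hθ).le)⟩

end NestedEntropy

/-- The nested entropy function is concave on the set of strictly
positive probability vectors; hence the objective of problem `MaxSatisNL` is concave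
on this set, so `MaxSatisNL` is a convex maximization problem. -/
theorem nested_entropy_concave
    {M 𝒩 : Type*} [Fintype M] [Nonempty M] [Fintype 𝒩] [DecidableEq 𝒩]
    (B : M → 𝒩) (hB : Function.Surjective B)
    (τ : 𝒩 → ℝ) (hτ0 : ∀ N, 0 < τ N) (hτ1 : ∀ N, τ N ≤ 1)
    (θ : ℝ) (hθ : 0 < θ) (V : M → ℝ) :
    ConcaveOn ℝ {p : M → ℝ | (∀ m, 0 < p m) ∧ ∑ m, p m = 1}
      (fun p => -∑ m, (τ (B m) * p m * Real.log (p m) +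
        (1 - τ (B m)) * p m *
          Real.log (∑ m' ∈ univ.filter (fun m' => B m' = B m), p m'))) ∧
    ConcaveOn ℝ {p : M → ℝ | (∀ m, 0 < p m) ∧ ∑ m, p m = 1}
      (fun p => (∑ m, V m * p m) + (1 / θ) *
        (-∑ m, (τ (B m) * p m * Real.log (p m) +
          (1 - τ (B m)) * p m *
            Real.log (∑ m' ∈ univ.filter (fun m' => B m' = B m), p m')))) := by
  have subset_Ici : {p : M → ℝ | (∀ m, 0 < p m) ∧ ∑ m, p m = 1} ⊆ Set.Ici 0 :=
    fun _ hp m => (hp.1 m).le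
  have convex := convex_setOf_pos_and_sum_eq ℝ (ι := M) 1
  exact (nested_entropy_concave_general B (fun N => ⟨(hτ0 N).le, hτ1 N⟩) hθ V).imp
    (·.subset subset_Ici convex) (·.subset subset_Ici convex)
end
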